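/- For a symmetric positive-definite kernel $k$ on a set $S$ (that is, $k(x,y)=k(y,x)$ and $\sum_{i,j} a_i a_j k(x_i,x_j)\ge 0$ for all finite families of points $x_i\in S$ and reals $a_i$) let $\mathcal H_k$ be its reproducing kernel Hilbert space. For (possibly signed) measures $P,Q$ let $\mathrm{MMD}_k(P,Q)$ be the nonnegative square root of $\iint k\,dP\,dP-2\iint k\,dP\,dQ+\iint k\,dQ\,dQ$, the integrals being finite sums for discrete measures $\sum_i w_i\delta_{u_i}$ with real weights. Let $U\subseteq\mathbb R^s$, $X\subseteq\mathbb R^d$, let $G_\theta:U\to X$ be measurable, let $k$ be a measurable symmetric positive-definite kernel on $X$, and let $c$ be a measurable symmetric positive-definite kernel on $U$. Put $c_\theta(u,v)=k(G_\theta(u),G_\theta(v))$ and suppose that $\mathcal H_{c_\theta}\subseteq\mathcal H_c$ as sets of functions on $U$; equivalently, $f\circ G_\theta\in\mathcal H_c$ for every $f\in\mathcal H_k$ (in particular $u\mapsto k(x,G_\theta(u))$ belongs to $\mathcal H_c$ for every $x\in X$). (a) There exists a constant $K>0$, depending only on $c$, $k$ and $G_\theta$, such that for every Borel probability measure $\mathbb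 U$ on $U$ with $\int\sqrt{c(u,u)}\,d\mathbb U(u)<\infty$, every Borel probability measure $\mathbb Q$ on $X$ with $\int\sqrt{k(x,x)}\,d\mathbb Q(x)<\infty$, every $m$, all points $u_1,\dots,u_m\in U$ and all weights $w\in\mathbb R^m$, $$\bigl|\mathrm{MMD}_k(\mathbb P_\theta,\mathbb Q)-\mathrm{MMD}_k(\mathbb P_\theta^{m,w},\mathbb Q)\bigr|\le K\cdot\mathrm{MMD}_c\Bigl(\mathbb U,\sum_{i=1}^m w_i\delta_{u_i}\Bigr),$$ where $\mathbb P_\theta$ is the pushforward of $\mathbb U$ under $G_\theta$ and $\mathbb P_\theta^{m,w}=\sum_{i=1}^m w_i\delta_{G_\theta(u_i)}$. (b) For every Borel probability measure $\mathbb U$ on $U$ with $\int\sqrt{c(u,u)}\,d\mathbb U(u)<\infty$ and all points $u_1,\dots,u_m\in U$ for which the matrix $C=(c(u_i,u_j))_{i,j}$ is invertible, the function $w\mapsto\mathrm{MMD}_c(\mathbb U,\sum_{i=1}^m w_i\delta_{u_i})$ on $\mathbb R^m$ has exactly one minimiser, namely $w^*=C^{-1}z$ with $z_i=\int c(u_i,v)\,d\mathbb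 U(v)$. -/

import Mathlib

open MeasureTheory

/-- A symmetric, positive-definite (reproducing) kernel. -/
def IsPosDefKernel {S : Type*} (k : S → S → ℝ) : Prop :=
  (∀ x y, k x y = k y x) ∧
    ∀ (n : ℕ) (x : Fin n → S) (a : Fin n → ℝ),
      0 ≤ ∑ i, ∑ j, a i * a j * k (x i) (x j)

/-- The pullback `(u, v) ↦ k (G u) (G v)` of a kernel `k` along a map `G`. -/
def pullbackKernel {S T : Type*} (k : T → T → ℝ) (G : S → T) : S → S → ℝ :=
  fun u v => k (G u) (G v)

theorem IsPosDefKernel.pullback {S T : Type*} {k : T → T → ℝ} (hk : IsPosDefKernel k)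
    (G : S → T) : IsPosDefKernel (pullbackKernel k G) :=
  ⟨fun u v => hk.1 (G u) (G v), fun n x a => hk.2 n (fun i => G (x i)) a⟩

/-- A real-valued kernel as a matrix of operators on the one-dimensional Hilbert space `ℝ`, the
form in which Mathlib's theory of reproducing kernel Hilbert spaces takes it: the entry at `(x, y)`
is multiplication by `k x y`. -/
noncomputable def kernelMatrix {S : Type*} (k : S → S → ℝ) : Matrix S S (ℝ →L[ℝ] ℝ) :=
  Matrix.of fun x y => k x y • (1 : ℝ →L[ℝ] ℝ)

theorem IsPosDefKernel.posSemidef {S : Type*} {k : S → S → ℝ} (hk : IsPosDefKernel k) :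
    (kernelMatrix k).PosSemidef := by
  have t := (RKHS.posSemidef_tfae (K := kernelMatrix k)).out 0 2
  refine t.mpr ⟨?_, fun f => ?_⟩
  · ext x y
    simp [kernelMatrix, Matrix.conjTranspose_apply, hk.1 y x]
  · have h := hk.2 f.support.card (fun i => (f.support.equivFin.symm i : S))
      (fun i => f (f.support.equivFin.symm i : S))
    have e : ∀ g : S → ℝ, ∑ i, g (f.support.equivFin.symm i : S) = ∑ x ∈ f.support, g x := by
      intro g
      rw [Equiv.sum_comp f.support.equivFin.symm (fun x : f.support => g x)]
      exact Finset.sum_coe_sort f.support g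
    have e2 : ∀ x, ∑ j, f x * f (f.support.equivFin.symm j : S) *
        k x (f.support.equivFin.symm j : S) = ∑ y ∈ f.support, f x * f y * k x y :=
      fun x => e (fun y => f x * f y * k x y)
    simp only [e2] at h
    rw [e (fun x => ∑ y ∈ f.support, f x * f y * k x y)] at h
    refine h.trans_eq ?_
    change _ = ∑ x ∈ f.support, ∑ y ∈ f.support, inner ℝ (kernelMatrix k y x (f x)) (f y)
    refine Finset.sum_congr rfl fun x _ => Finset.sum_congr rfl fun y _ => ?_
    simp [kernelMatrix, hk.1 y x]
    ring

/-- The reproducing kernel Hilbert space `H_k` of the kernel `k`, as a set of functions. -/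
noncomputable def rkhs {S : Type*} (k : S → S → ℝ) (hk : IsPosDefKernel k) : Set (S → ℝ) :=
  haveI : Fact (kernelMatrix k).PosSemidef := ⟨hk.posSemidef⟩
  Set.range fun f : RKHS.OfKernel (kernelMatrix k) => (⇑f : S → ℝ)

/-- The MMD between two measures: the nonnegative square root of
`∫∫ k dP dP - 2 ∫∫ k dP dQ + ∫∫ k dQ dQ`. -/
noncomputable def mmd {S : Type*} [MeasurableSpace S] (k : S → S → ℝ) (P Q : Measure S) : ℝ :=
  Real.sqrt ((∫ x, ∫ y, k x y ∂P ∂P) - 2 * (∫ x, ∫ y, k x y ∂Q ∂P) + (∫ x, ∫ y, k x y ∂Q ∂Q))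

/-- The MMD between the signed discrete measure `∑ᵢ wᵢ δ_{yᵢ}` and the measure `P`: the integrals
against the discrete measure are finite sums. -/
noncomputable def mmdDisc {S : Type*} [MeasurableSpace S] (k : S → S → ℝ)
    {m : ℕ} (y : Fin m → S) (w : Fin m → ℝ) (P : Measure S) : ℝ :=
  Real.sqrt ((∑ i, ∑ j, w i * w j * k (y i) (y j)) - 2 * (∑ i, w i * ∫ x, k (y i) x ∂P)
    + (∫ x, ∫ x', k x x' ∂P ∂P))

/-- The weights `c(U,U)⁻¹ z(U)`, where `c(U,U)ᵢⱼ = c(uᵢ, uⱼ)` and `z(U)ᵢ = ∫ c(uᵢ, v) dP(v)`. -/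
noncomputable def optimalWeights {S : Type*} [MeasurableSpace S] (c : S → S → ℝ)
    {m : ℕ} (u : Fin m → S) (P : Measure S) : Fin m → ℝ :=
  Matrix.mulVec (Matrix.of fun i j => c (u i) (u j))⁻¹ (fun i => ∫ v, c (u i) v ∂P)

section RealRKHS

open RKHS Filter Topology
open scoped InnerProductSpace

variable {S : Type*} {H : Type*} [NormedAddCommGroup H] [InnerProductSpace ℝ H] [CompleteSpace H]
  [RKHS ℝ H S ℝ]

/-- The representer of evaluation at `x` in a reproducing kernel Hilbert space of real-valued
functions. -/
noncomputable def evalRepr (H : Type*) [NormedAddCommGroup H] [InnerProductSpace ℝ H]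
    [CompleteSpace H] [RKHS ℝ H S ℝ] (x : S) : H :=
  kerFun H x (1 : ℝ)

theorem inner_evalRepr (f : H) (x : S) : ⟪f, evalRepr H x⟫_ℝ = f x := by
  simp [evalRepr]

theorem evalRepr_inner (f : H) (x : S) : ⟪evalRepr H x, f⟫_ℝ = f x := by
  rw [real_inner_comm, inner_evalRepr]

theorem dense_span_evalRepr :
    (Submodule.span ℝ (Set.range (evalRepr H : S → H))).topologicalClosure = ⊤ := by
  rw [← top_le_iff, ← kerFun_dense (𝕜 := ℝ) H]
  refine Submodule.topologicalClosure_mono (Submodule.span_le.mpr ?_)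
  rintro _ ⟨x, v, rfl⟩
  have : kerFun H x v = v • evalRepr H x := by
    rw [evalRepr, ← map_smul, smul_eq_mul, mul_one]
  rw [this]
  exact Submodule.smul_mem _ _ (Submodule.subset_span ⟨x, rfl⟩)

/-- If the representers of evaluation are measurable, so is every function in the space. -/
theorem measurable_coe_rkhs [MeasurableSpace S]
    (hmeas : ∀ x : S, Measurable (evalRepr H x : S → ℝ)) (f : H) : Measurable (f : S → ℝ) := by
  have hspan : ∀ g ∈ Submodule.span ℝ (Set.range (evalRepr H : S → H)),
      Measurable (g : S → ℝ) := by
    intro g hg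
    induction hg using Submodule.span_induction with
    | mem g hg => obtain ⟨x, rfl⟩ := hg; exact hmeas x
    | zero => rw [coe_zero]; exact measurable_zero
    | add f g _ _ hf hg => rw [coe_add]; exact hf.add hg
    | smul a f _ hf => rw [coe_smul]; exact hf.const_smul a
  have hf : f ∈ closure (Submodule.span ℝ (Set.range (evalRepr H : S → H)) : Set H) := by
    rw [← Submodule.topologicalClosure_coe, dense_span_evalRepr]
    trivial
  obtain ⟨g, hg, hlim⟩ := mem_closure_iff_seq_limit.mp hf
  refine measurable_of_tendsto_metrizable (fun n => hspan _ (hg n)) ?_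
  exact tendsto_pi_nhds.mpr fun x => ((continuous_eval x).tendsto f).comp hlim

/-- `μ` is the (weak) mean embedding of the measure `P`: integration against `P` is the inner
product with `μ`. -/
def IsMeanEmbedding [MeasurableSpace S] (P : Measure S) (μ : H) : Prop :=
  ∀ f : H, Integrable (f : S → ℝ) P ∧ ∫ x, f x ∂P = ⟪μ, f⟫_ℝ

theorem exists_isMeanEmbedding_map {T : Type*} [MeasurableSpace S] [MeasurableSpace T]
    (hmeas : ∀ x : S, Measurable (evalRepr H x : S → ℝ)) {G : T → S} (hG : Measurable G)
    {P : Measure T} {g : T → ℝ} (hg : Integrable g P) (hle : ∀ t, ‖evalRepr H (G t)‖ ≤ g t) :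
    ∃ μ : H, IsMeanEmbedding (Measure.map G P) μ := by
  have hbound : ∀ (f : H) (t : T), ‖f (G t)‖ ≤ ‖f‖ * g t := fun f t => by
    rw [← inner_evalRepr]
    exact (norm_inner_le_norm _ _).trans (mul_le_mul_of_nonneg_left (hle t) (norm_nonneg _))
  have hint : ∀ f : H, Integrable (fun t => f (G t)) P := fun f =>
    (hg.const_mul ‖f‖).mono' ((measurable_coe_rkhs hmeas f).comp hG).aestronglyMeasurable
      (ae_of_all _ (hbound f))
  let L : H →L[ℝ] ℝ := LinearMap.mkContinuous
    { toFun := fun f => ∫ t, f (G t) ∂P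
      map_add' := fun f f' => by
        simp only [coe_add, Pi.add_apply]
        exact integral_add (hint f) (hint f')
      map_smul' := fun a f => by
        simp only [coe_smul, Pi.smul_apply, smul_eq_mul, RingHom.id_apply]
        exact integral_const_mul a _ }
    (∫ t, g t ∂P) fun f => by
      refine (norm_integral_le_of_norm_le (hg.const_mul ‖f‖) (ae_of_all _ (hbound f))).trans ?_
      rw [integral_const_mul, mul_comm]
  refine ⟨(InnerProductSpace.toDual ℝ H).symm L, fun f => ⟨?_, ?_⟩⟩
  · exact (integrable_map_measure (measurable_coe_rkhs hmeas f).aestronglyMeasurable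
      hG.aemeasurable).mpr (hint f)
  · rw [integral_map hG.aemeasurable (measurable_coe_rkhs hmeas f).aestronglyMeasurable,
      InnerProductSpace.toDual_symm_apply]
    rfl

theorem exists_isMeanEmbedding [MeasurableSpace S]
    (hmeas : ∀ x : S, Measurable (evalRepr H x : S → ℝ)) {P : Measure S} {g : S → ℝ}
    (hg : Integrable g P) (hle : ∀ x, ‖evalRepr H x‖ ≤ g x) :
    ∃ μ : H, IsMeanEmbedding P μ := by
  simpa using exists_isMeanEmbedding_map hmeas measurable_id hg hle

section Kernel

variable [MeasurableSpace S] {k : S → S → ℝ} {P Q : Measure S} {μ ν : H}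

theorem IsMeanEmbedding.integral_kernel (hk : ∀ x y, evalRepr H x y = k x y)
    (hμ : IsMeanEmbedding P μ) (x : S) :
    ∫ y, k x y ∂P = μ x := by
  simp only [← hk]
  rw [(hμ (evalRepr H x)).2, inner_evalRepr]

theorem IsMeanEmbedding.integral_integral_kernel (hk : ∀ x y, evalRepr H x y = k x y)
    (hμ : IsMeanEmbedding P μ)
    (hν : IsMeanEmbedding Q ν) : ∫ x, ∫ y, k x y ∂Q ∂P = ⟪μ, ν⟫_ℝ := by
  simp only [hν.integral_kernel hk]
  exact (hμ ν).2

theorem mmd_eq_norm_sub (hk : ∀ x y, evalRepr H x y = k x y)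
    (hμ : IsMeanEmbedding P μ) (hν : IsMeanEmbedding Q ν) :
    mmd k P Q = ‖μ - ν‖ := by
  rw [mmd, hμ.integral_integral_kernel hk hμ, hμ.integral_integral_kernel hk hν,
    hν.integral_integral_kernel hk hν, real_inner_self_eq_norm_sq, real_inner_self_eq_norm_sq,
    ← norm_sub_sq_real, Real.sqrt_sq (norm_nonneg _)]

theorem mmdDisc_radicand_eq (hk : ∀ x y, evalRepr H x y = k x y)
    {m : ℕ} (y : Fin m → S) (w : Fin m → ℝ) (hμ : IsMeanEmbedding P μ) :
    (∑ i, ∑ j, w i * w j * k (y i) (y j)) - 2 * (∑ i, w i * ∫ x, k (y i) x ∂P)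
      + (∫ x, ∫ x', k x x' ∂P ∂P) = ‖∑ i, w i • evalRepr H (y i) - μ‖ ^ 2 := by
  rw [norm_sub_sq_real, hμ.integral_integral_kernel hk hμ,
    real_inner_self_eq_norm_sq, ← real_inner_self_eq_norm_sq (∑ i, w i • evalRepr H (y i))]
  simp only [sum_inner, inner_sum, real_inner_smul_left, real_inner_smul_right]
  simp only [hμ.integral_kernel hk, evalRepr_inner, hk, mul_assoc]

theorem mmdDisc_eq_norm_sub (hk : ∀ x y, evalRepr H x y = k x y)
    {m : ℕ} (y : Fin m → S) (w : Fin m → ℝ) (hμ : IsMeanEmbedding P μ) :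
    mmdDisc k y w P = ‖∑ i, w i • evalRepr H (y i) - μ‖ := by
  rw [mmdDisc, mmdDisc_radicand_eq hk y w hμ, Real.sqrt_sq (norm_nonneg _)]

end Kernel

/-- An inclusion of reproducing kernel Hilbert spaces, as sets of functions, is bounded. -/
theorem exists_continuousLinearMap_of_subset {H' : Type*} [NormedAddCommGroup H']
    [InnerProductSpace ℝ H'] [CompleteSpace H'] [RKHS ℝ H' S ℝ]
    (hsub : (Set.range fun f : H => (f : S → ℝ)) ⊆ Set.range fun f : H' => (f : S → ℝ)) :
    ∃ J : H →L[ℝ] H', ∀ (f : H) (x : S), J f x = f x := by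
  have hex : ∀ f : H, ∃ g : H', (g : S → ℝ) = f := fun f => hsub ⟨f, rfl⟩
  choose j hj using hex
  let J : H →ₗ[ℝ] H' :=
    { toFun := j
      map_add' := fun f g => DFunLike.coe_injective (by simp [hj])
      map_smul' := fun a f => DFunLike.coe_injective (by simp [hj]) }
  refine ⟨ContinuousLinearMap.ofSeqClosedGraph (g := J) fun u f g hu hg => RKHS.ext fun x => ?_,
    fun f x => congrFun (hj f) x⟩
  have h₁ : Tendsto (fun n => u n x) atTop (𝓝 (f x)) := ((continuous_eval x).tendsto f).comp hu
  have h₂ : Tendsto (fun n => (j (u n)) x) atTop (𝓝 (g x)) :=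
    ((continuous_eval x).tendsto g).comp hg
  simp only [hj] at h₂
  exact (tendsto_nhds_unique h₂ h₁).trans (congrFun (hj f) x).symm

section Inclusion

variable {H' : Type*} [NormedAddCommGroup H'] [InnerProductSpace ℝ H'] [CompleteSpace H']
  [RKHS ℝ H' S ℝ] {J : H →L[ℝ] H'}

theorem adjoint_evalRepr_of_inclusion (hJ : ∀ (f : H) (x : S), J f x = f x)
    (x : S) : J.adjoint (evalRepr H' x) = evalRepr H x :=
  ext_inner_right ℝ fun f => by
    rw [ContinuousLinearMap.adjoint_inner_left, evalRepr_inner, evalRepr_inner, hJ]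

theorem norm_evalRepr_le_of_inclusion (hJ : ∀ (f : H) (x : S), J f x = f x)
    (x : S) : ‖evalRepr H x‖ ≤ ‖J‖ * ‖evalRepr H' x‖ := by
  rw [← adjoint_evalRepr_of_inclusion hJ, ← ContinuousLinearMap.adjoint.norm_map J]
  exact J.adjoint.le_opNorm _

theorem IsMeanEmbedding.adjoint_of_inclusion (hJ : ∀ (f : H) (x : S), J f x = f x)
    [MeasurableSpace S] {P : Measure S} {μ : H'}
    (hμ : IsMeanEmbedding P μ) : IsMeanEmbedding P (J.adjoint μ) := fun f => by
  have h := hμ (J f)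
  rw [ContinuousLinearMap.adjoint_inner_left]
  simpa only [show (J f : S → ℝ) = f from funext (hJ f)] using h

theorem mmdDisc_le_of_inclusion (hJ : ∀ (f : H) (x : S), J f x = f x)
    [MeasurableSpace S] {k c : S → S → ℝ}
    (hk : ∀ x y, evalRepr H x y = k x y) (hc : ∀ x y, evalRepr H' x y = c x y) {P : Measure S}
    {μ : H'} (hμ : IsMeanEmbedding P μ) {m : ℕ} (y : Fin m → S) (w : Fin m → ℝ) :
    mmdDisc k y w P ≤ ‖J‖ * mmdDisc c y w P := by
  rw [mmdDisc_eq_norm_sub hk y w (hμ.adjoint_of_inclusion hJ), mmdDisc_eq_norm_sub hc y w hμ,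
    ← ContinuousLinearMap.adjoint.norm_map J]
  refine le_of_eq_of_le (congrArg norm ?_) (J.adjoint.le_opNorm _)
  simp [adjoint_evalRepr_of_inclusion hJ]

end Inclusion

end RealRKHS

section OfKernel

variable {S : Type*} {k : S → S → ℝ} [Fact (kernelMatrix k).PosSemidef]

theorem evalRepr_ofKernel (hk : IsPosDefKernel k) (x y : S) :
    evalRepr (RKHS.OfKernel (kernelMatrix k)) x y = k x y := by
  rw [evalRepr, RKHS.kerFun_apply, RKHS.OfKernel.kernel_ofKernel]
  simp [kernelMatrix, hk.1 y x]

theorem norm_evalRepr_ofKernel (hk : IsPosDefKernel k) (x : S) :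
    ‖evalRepr (RKHS.OfKernel (kernelMatrix k)) x‖ = Real.sqrt (k x x) := by
  rw [← evalRepr_ofKernel hk, ← inner_evalRepr, real_inner_self_eq_norm_sq,
    Real.sqrt_sq (norm_nonneg _)]

theorem measurable_evalRepr_ofKernel [MeasurableSpace S] (hk : IsPosDefKernel k)
    (hmeas : ∀ x, Measurable (k x)) (x : S) :
    Measurable (evalRepr (RKHS.OfKernel (kernelMatrix k)) x : S → ℝ) := by
  rw [show (evalRepr (RKHS.OfKernel (kernelMatrix k)) x : S → ℝ) = k x from
    funext (evalRepr_ofKernel hk x)]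
  exact hmeas x

end OfKernel

theorem mmdDisc_map {S T : Type*} [MeasurableSpace S] [MeasurableSpace T] {k : T → T → ℝ}
    (hmeas : ∀ x, Measurable (k x)) {G : S → T} (hG : Measurable G) {P : Measure S}
    (hmeas' : Measurable fun x => ∫ y, k x y ∂(Measure.map G P))
    {m : ℕ} (u : Fin m → S) (w : Fin m → ℝ) :
    mmdDisc k (fun i => G (u i)) w (Measure.map G P) = mmdDisc (pullbackKernel k G) u w P := by
  have h : ∀ x, ∫ y, k x y ∂(Measure.map G P) = ∫ v, k x (G v) ∂P := fun x =>
    integral_map hG.aemeasurable (hmeas x).aestronglyMeasurable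
  have h' := integral_map hG.aemeasurable (μ := P) hmeas'.aestronglyMeasurable
  rw [mmdDisc, h', mmdDisc]
  simp only [h, pullbackKernel]

section Minimiser

open Matrix

/-- A quadratic function `wᵀ C w - 2 wᵀ z` with symmetric invertible `C`, with the square completed
at its critical point `C⁻¹ z`. -/
theorem dotProduct_mulVec_sub_eq_complete_square {n : Type*} [Fintype n] [DecidableEq n]
    {C : Matrix n n ℝ} (hC : Cᵀ = C) (hu : IsUnit C) (z w : n → ℝ) :
    w ⬝ᵥ C *ᵥ w - 2 * (w ⬝ᵥ z) =
      (w - C⁻¹ *ᵥ z) ⬝ᵥ C *ᵥ (w - C⁻¹ *ᵥ z) - (C⁻¹ *ᵥ z) ⬝ᵥ z := by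
  have hz : C *ᵥ (C⁻¹ *ᵥ z) = z := by
    rw [mulVec_mulVec, mul_nonsing_inv _ ((isUnit_iff_isUnit_det C).mp hu), one_mulVec]
  have hsymm : (C⁻¹ *ᵥ z) ⬝ᵥ C *ᵥ w = w ⬝ᵥ z := by
    rw [dotProduct_mulVec, ← mulVec_transpose, hC, hz, dotProduct_comm]
  rw [mulVec_sub, hz, sub_dotProduct, dotProduct_sub, dotProduct_sub, hsymm]
  ring

theorem IsPosDefKernel.posSemidef_gram {S : Type*} {c : S → S → ℝ} (hc : IsPosDefKernel c) {m : ℕ}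
    (u : Fin m → S) : (Matrix.of fun i j => c (u i) (u j)).PosSemidef := by
  refine PosSemidef.of_dotProduct_mulVec_nonneg ?_ fun a => ?_
  · ext i j
    simp [hc.1 (u j) (u i)]
  · refine (hc.2 m u a).trans_eq ?_
    simp only [dotProduct, mulVec, Finset.mul_sum, of_apply, star_trivial]
    exact Finset.sum_congr rfl fun i _ => Finset.sum_congr rfl fun j _ => by ring

theorem setOf_mmdDisc_minimiser_eq {S : Type*} [MeasurableSpace S] {c : S → S → ℝ}
    (hc : IsPosDefKernel c) {P : Measure S} {m : ℕ} {u : Fin m → S}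
    (hnonneg : ∀ w : Fin m → ℝ, 0 ≤ (∑ i, ∑ j, w i * w j * c (u i) (u j))
      - 2 * (∑ i, w i * ∫ x, c (u i) x ∂P) + (∫ x, ∫ x', c x x' ∂P ∂P))
    (hu : IsUnit (Matrix.of fun i j => c (u i) (u j))) :
    {w : Fin m → ℝ | ∀ w' : Fin m → ℝ, mmdDisc c u w P ≤ mmdDisc c u w' P} =
      {optimalWeights c u P} := by
  set C : Matrix (Fin m) (Fin m) ℝ := Matrix.of fun i j => c (u i) (u j) with hCdef
  set z : Fin m → ℝ := fun i => ∫ v, c (u i) v ∂P with hz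
  have hpsd : C.PosSemidef := hc.posSemidef_gram u
  have hpos : C.PosDef := hpsd.posDef_iff_isUnit.mpr hu
  have hsymm : Cᵀ = C := by ext i j; exact hc.1 _ _
  have hopt : optimalWeights c u P = C⁻¹ *ᵥ z := rfl
  have hrad : ∀ w : Fin m → ℝ, (∑ i, ∑ j, w i * w j * c (u i) (u j))
      - 2 * (∑ i, w i * ∫ x, c (u i) x ∂P) + (∫ x, ∫ x', c x x' ∂P ∂P) =
      (w - C⁻¹ *ᵥ z) ⬝ᵥ C *ᵥ (w - C⁻¹ *ᵥ z) - (C⁻¹ *ᵥ z) ⬝ᵥ z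
        + (∫ x, ∫ x', c x x' ∂P ∂P) := fun w => by
    rw [← dotProduct_mulVec_sub_eq_complete_square hsymm hu]
    congr 2
    simp only [dotProduct, mulVec, Finset.mul_sum, hCdef, of_apply]
    exact Finset.sum_congr rfl fun i _ => Finset.sum_congr rfl fun j _ => by ring
  have hquad : ∀ a : Fin m → ℝ, 0 ≤ a ⬝ᵥ C *ᵥ a := fun a => by
    simpa using hpsd.dotProduct_mulVec_nonneg a
  ext w
  rw [Set.mem_ofPred_eq, Set.mem_singleton_iff, hopt]
  constructor
  · intro hw
    have h := hw (C⁻¹ *ᵥ z)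
    rw [mmdDisc, mmdDisc, Real.sqrt_le_sqrt_iff (hnonneg _), hrad, hrad, sub_self,
      zero_dotProduct] at h
    by_contra hne
    have := hpos.dotProduct_mulVec_pos (sub_ne_zero.mpr hne)
    rw [star_trivial] at this
    linarith
  · rintro rfl w'
    refine Real.sqrt_le_sqrt ?_
    rw [hrad, hrad, sub_self, zero_dotProduct]
    linarith [hquad (w' - C⁻¹ *ᵥ z)]

end Minimiser

theorem mmd_optimally_weighted_bound
    {s d : ℕ}
    (U : Set (EuclideanSpace ℝ (Fin s))) (X : Set (EuclideanSpace ℝ (Fin d)))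
    (G : U → X) (hG : Measurable G)
    (k : X → X → ℝ) (hk : IsPosDefKernel k) (hk_meas : ∀ x, Measurable (k x))
    (c : U → U → ℝ) (hc : IsPosDefKernel c) (hc_meas : ∀ u, Measurable (c u))
    (hsub : rkhs (pullbackKernel k G) (hk.pullback G) ⊆ rkhs c hc) :
    -- the constant depends on `c`, `k`, `G` only
    (∃ K : ℝ, 0 < K ∧
      ∀ 𝕌 : Measure U, IsProbabilityMeasure 𝕌 → Integrable (fun u => Real.sqrt (c u u)) 𝕌 →
      ∀ Q : Measure X, IsProbabilityMeasure Q → Integrable (fun x => Real.sqrt (k x x)) Q →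
      ∀ (m : ℕ) (u : Fin m → U) (w : Fin m → ℝ),
        |mmd k (Measure.map G 𝕌) Q - mmdDisc k (fun i => G (u i)) w Q| ≤
          K * mmdDisc c u w 𝕌) ∧
    -- the minimiser of the bound over the weights, in closed form
    (∀ 𝕌 : Measure U, IsProbabilityMeasure 𝕌 → Integrable (fun u => Real.sqrt (c u u)) 𝕌 →
      ∀ (m : ℕ) (u : Fin m → U), IsUnit (Matrix.of fun i j => c (u i) (u j)) →
        {w : Fin m → ℝ | ∀ w' : Fin m → ℝ, mmdDisc c u w 𝕌 ≤ mmdDisc c u w' 𝕌} =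
          {optimalWeights c u 𝕌}) := by
  have : Fact (kernelMatrix k).PosSemidef := ⟨hk.posSemidef⟩
  have : Fact (kernelMatrix c).PosSemidef := ⟨hc.posSemidef⟩
  have : Fact (kernelMatrix (pullbackKernel k G)).PosSemidef := ⟨(hk.pullback G).posSemidef⟩
  have hk_repr := evalRepr_ofKernel hk
  have hc_repr := evalRepr_ofKernel hc
  have hkG_repr := evalRepr_ofKernel (hk.pullback G)
  have hk_reprMeas := measurable_evalRepr_ofKernel hk hk_meas
  have hc_mean : ∀ 𝕌 : Measure U, Integrable (fun u => Real.sqrt (c u u)) 𝕌 →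
      ∃ μ : RKHS.OfKernel (kernelMatrix c), IsMeanEmbedding 𝕌 μ := fun 𝕌 h𝕌 =>
    exists_isMeanEmbedding (measurable_evalRepr_ofKernel hc hc_meas) h𝕌
      fun x => (norm_evalRepr_ofKernel hc x).le
  constructor
  · obtain ⟨J, hJ⟩ := exists_continuousLinearMap_of_subset
      (H := RKHS.OfKernel (kernelMatrix (pullbackKernel k G)))
      (H' := RKHS.OfKernel (kernelMatrix c)) hsub
    refine ⟨‖J‖ + 1, by positivity, fun 𝕌 _ h𝕌 Q _ hQ m u w => ?_⟩
    obtain ⟨μ, hμ⟩ := hc_mean 𝕌 h𝕌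
    obtain ⟨q, hq⟩ := exists_isMeanEmbedding hk_reprMeas hQ
      fun x => (norm_evalRepr_ofKernel hk x).le
    have hdom : ∀ v, ‖evalRepr (RKHS.OfKernel (kernelMatrix k)) (G v)‖ ≤
        ‖J‖ * Real.sqrt (c v v) := fun v => by
      have h := norm_evalRepr_le_of_inclusion hJ v
      rwa [norm_evalRepr_ofKernel hc, norm_evalRepr_ofKernel (hk.pullback G), pullbackKernel,
        ← norm_evalRepr_ofKernel hk] at h
    obtain ⟨p, hp⟩ := exists_isMeanEmbedding_map hk_reprMeas hG (h𝕌.const_mul ‖J‖) hdom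
    have hp_meas : Measurable fun x => ∫ y, k x y ∂(Measure.map G 𝕌) := by
      simp only [hp.integral_kernel hk_repr]
      exact measurable_coe_rkhs hk_reprMeas p
    rw [mmd_eq_norm_sub hk_repr hp hq, mmdDisc_eq_norm_sub hk_repr _ w hq, abs_sub_comm]
    refine (abs_norm_sub_norm_le _ _).trans ?_
    rw [sub_sub_sub_cancel_right, ← mmdDisc_eq_norm_sub hk_repr _ w hp,
      mmdDisc_map hk_meas hG hp_meas]
    refine (mmdDisc_le_of_inclusion hJ hkG_repr hc_repr hμ u w).trans ?_
    exact mul_le_mul_of_nonneg_right (by linarith) (Real.sqrt_nonneg _)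
  · intro 𝕌 _ h𝕌 m u hu
    obtain ⟨μ, hμ⟩ := hc_mean 𝕌 h𝕌
    refine setOf_mmdDisc_minimiser_eq hc (fun w => ?_) hu
    rw [mmdDisc_radicand_eq hc_repr u w hμ]
    positivity
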